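/- Let Φ ∈ ℝ^{m×n} have restricted isometry constant δ_{K+1} < 1 of order K+1, let x ∈ ℝ^n be K-sparse with support T, |T| = K ≥ 1, K + 1 ≤ n, and let y = Φx + v. Suppose that after k iterations (1 ≤ k < K) a run of OMP has selected only correct indices, i.e., T^k ⊆ T with |T^k| = k. Then v̄ := max_{i ∈ {1,…,n}\(T ∪ T^k)} |⟨φ_i, r^k⟩| satisfies v̄ ≤ δ_{K+1}·‖x_{T\T^k}‖₂ + √(1 + δ_1)·‖v‖₂, where x_{T\T^k} denotes the restriction of x to the indices in T\T^k and δ_1 is the restricted isometry constant of order 1. -/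

import Mathlib

noncomputable section
open Finset

/-- `Vec n` is `ℝ^n` with the Euclidean (ℓ²) norm. -/
abbrev Vec (n : ℕ) := EuclideanSpace ℝ (Fin n)

/-- The standard inner product `⟨u, v⟩ = ∑ i, u i * v i`. -/
def dot {n : ℕ} (u v : Vec n) : ℝ := ∑ i, u i * v i

/-- The `j`-th column of a matrix, as a Euclidean vector. -/
def col {m n : ℕ} (Φ : Matrix (Fin m) (Fin n) ℝ) (j : Fin n) : Vec m :=
  WithLp.toLp 2 fun i => Φ i j

/-- Matrix-vector multiplication `Φ x`, valued in Euclidean space. -/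
def mulVec' {m n : ℕ} (Φ : Matrix (Fin m) (Fin n) ℝ) (x : Vec n) : Vec m :=
  WithLp.toLp 2 fun i => ∑ j, Φ i j * x j

/-- The support of a vector, as a `Finset`. -/
def suppF {n : ℕ} (x : Vec n) : Finset (Fin n) :=
  Finset.univ.filter fun i => x i ≠ 0

/-- Restriction of a vector to an index set (zero outside the set). -/
def restrict {n : ℕ} (x : Vec n) (S : Finset (Fin n)) : Vec n :=
  WithLp.toLp 2 fun i => if i ∈ S then x i else 0

/-- `RIPConst Φ L δ` : δ is the restricted isometry constant of `Φ` of order `L`,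
i.e. the smallest `c ≥ 0` such that `(1-c)‖u‖² ≤ ‖Φu‖² ≤ (1+c)‖u‖²` for all
`L`-sparse `u`. -/
def RIPConst {m n : ℕ} (Φ : Matrix (Fin m) (Fin n) ℝ) (L : ℕ) (δ : ℝ) : Prop :=
  IsLeast {c : ℝ | 0 ≤ c ∧ ∀ u : Vec n, (suppF u).card ≤ L →
    (1 - c) * ‖u‖ ^ 2 ≤ ‖mulVec' Φ u‖ ^ 2 ∧ ‖mulVec' Φ u‖ ^ 2 ≤ (1 + c) * ‖u‖ ^ 2} δ

/-- Signal-to-noise ratio `‖Φx‖²/‖v‖²`. -/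
def SNR {m n : ℕ} (Φ : Matrix (Fin m) (Fin n) ℝ) (x : Vec n) (v : Vec m) : ℝ :=
  ‖mulVec' Φ x‖ ^ 2 / ‖v‖ ^ 2

/-- A run of `N` iterations of Orthogonal Matching Pursuit on data `(Φ, y)`:
`idx (k+1) = t^{k+1}` is the index selected at iteration `k+1`, `sets k = T^k`,
`est k = x^k` and `res k = r^k`. -/
structure OMPRun {m n : ℕ} (Φ : Matrix (Fin m) (Fin n) ℝ) (y : Vec m) (N : ℕ) where
  idx : ℕ → Fin n
  sets : ℕ → Finset (Fin n)
  est : ℕ → Vec n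
  res : ℕ → Vec m
  sets_zero : sets 0 = ∅
  est_zero : est 0 = 0
  res_zero : res 0 = y
  idx_not_mem : ∀ k < N, idx (k + 1) ∉ sets k
  idx_max : ∀ k < N, ∀ i : Fin n, i ∉ sets k →
    |dot (col Φ i) (res k)| ≤ |dot (col Φ (idx (k + 1))) (res k)|
  sets_succ : ∀ k < N, sets (k + 1) = insert (idx (k + 1)) (sets k)
  est_supp : ∀ k < N, suppF (est (k + 1)) ⊆ sets (k + 1)
  est_min : ∀ k < N, ∀ u : Vec n, suppF u ⊆ sets (k + 1) →
    ‖y - mulVec' Φ (est (k + 1))‖ ≤ ‖y - mulVec' Φ u‖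
  res_succ : ∀ k < N, res (k + 1) = y - mulVec' Φ (est (k + 1))

/-- The vector `Φᵀ w` restricted to an index set `A` (the vector of correlations
`⟨φ_i, w⟩` for `i ∈ A`, zero outside `A`), as a Euclidean vector. -/
def colDots {m n : ℕ} (Φ : Matrix (Fin m) (Fin n) ℝ) (A : Finset (Fin n)) (w : Vec m) : Vec n :=
  WithLp.toLp 2 fun i => if i ∈ A then dot (col Φ i) w else 0

/-- The vector `Φᵀ w` of all column correlations, as a plain function (so `‖·‖`
is the sup/ℓ∞ norm). -/
def dualVec {m n : ℕ} (Φ : Matrix (Fin m) (Fin n) ℝ) (w : Vec m) : Fin n → ℝ :=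
  fun i => dot (col Φ i) w

/-- `P⊥_S w` : the projection of `w` onto the orthogonal complement of the span
of the columns of `Φ` indexed by `S`. -/
def perpProj {m n : ℕ} (Φ : Matrix (Fin m) (Fin n) ℝ) (S : Finset (Fin n)) (w : Vec m) : Vec m :=
  w - (Submodule.orthogonalProjectionOnto (Submodule.span ℝ (col Φ '' (S : Set (Fin n)))) w : Vec m)

/-- The `j`-th largest value (1-indexed) among `{|x i| : i ∈ Γ}` (with
multiplicities); `0` if `j > |Γ|` or `j = 0`. -/
def kthLargest {n : ℕ} (x : Vec n) (Γ : Finset (Fin n)) (j : ℕ) : ℝ :=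
  if 1 ≤ j ∧ j ≤ Γ.card then
    (Multiset.sort (Γ.val.map fun i => |x i|) (· ≤ ·)).getD (Γ.card - j) 0
  else 0

/-!
Let `P` be the orthogonal projection onto the complement of the span of the columns selected so
far. The residual is `r = P y`, and `P` kills the part of `Φ x` that lives on selected indices, so
`⟨φ_i, r⟩ = ⟨P φ_i, P Φ w⟩ + ⟨φ_i, P v⟩`, where `w` is `x` restricted to `T \ T^k`. The noise term
is at most `‖φ_i‖ ‖v‖`. For the signal term, `P Φ` inherits the near-isometry property of `Φ` on
vectors supported off the selected indices, and by polarization a near-isometry almost preserves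
the inner product `⟨e_i, w⟩ = 0`.
-/

section NearIsometry

variable {E F : Type*} [NormedAddCommGroup E] [InnerProductSpace ℝ E]
  [NormedAddCommGroup F] [InnerProductSpace ℝ F]

/-- `A` is a near-isometry on the subspace `W` with distortion `δ`: it changes squared norms of
vectors of `W` by a factor between `1 - δ` and `1 + δ`. The restricted isometry property of order
`L` is this property on each coordinate subspace of dimension at most `L`. No sign is imposed on
`δ`. -/
def IsNearIsometryOn (A : E →ₗ[ℝ] F) (W : Submodule ℝ E) (δ : ℝ) : Prop :=
  ∀ u ∈ W, (1 - δ) * ‖u‖ ^ 2 ≤ ‖A u‖ ^ 2 ∧ ‖A u‖ ^ 2 ≤ (1 + δ) * ‖u‖ ^ 2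

namespace IsNearIsometryOn

variable {A : E →ₗ[ℝ] F} {W : Submodule ℝ E} {δ : ℝ}

theorem two_mul_inner_map_sub_inner_le (hA : IsNearIsometryOn A W δ) {u w : E} (hu : u ∈ W)
    (hw : w ∈ W) : 2 * (inner ℝ (A u) (A w) - inner ℝ u w) ≤ δ * (‖u‖ ^ 2 + ‖w‖ ^ 2) := by
  have hadd := (hA (u + w) (W.add_mem hu hw)).2
  have hsub := (hA (u - w) (W.sub_mem hu hw)).1
  rw [map_add, norm_add_sq_real, norm_add_sq_real] at hadd
  rw [map_sub, norm_sub_sq_real, norm_sub_sq_real] at hsub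
  linarith

theorem inner_map_sub_inner_le (hA : IsNearIsometryOn A W δ) {u w : E} (hu : u ∈ W)
    (hw : w ∈ W) : inner ℝ (A u) (A w) - inner ℝ u w ≤ δ * ‖u‖ * ‖w‖ := by
  rcases eq_or_ne u 0 with rfl | hu0
  · simp
  rcases eq_or_ne w 0 with rfl | hw0
  · simp
  -- Rescaling to equal norms turns the mean of the squared norms into their product.
  have hscaled := hA.two_mul_inner_map_sub_inner_le (W.smul_mem ‖w‖ hu) (W.smul_mem ‖u‖ hw)
  simp only [map_smul, real_inner_smul_left, real_inner_smul_right, norm_smul, norm_norm]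
    at hscaled
  have hpos : 0 < ‖u‖ * ‖w‖ := mul_pos (norm_pos_iff.2 hu0) (norm_pos_iff.2 hw0)
  refine le_of_mul_le_mul_left ?_ hpos
  linarith

theorem abs_inner_map_sub_inner_le (hA : IsNearIsometryOn A W δ) {u w : E} (hu : u ∈ W)
    (hw : w ∈ W) : |inner ℝ (A u) (A w) - inner ℝ u w| ≤ δ * ‖u‖ * ‖w‖ := by
  refine abs_le'.2 ⟨hA.inner_map_sub_inner_le hu hw, ?_⟩
  have hneg := hA.inner_map_sub_inner_le (W.neg_mem hu) hw
  simp only [map_neg, inner_neg_left, norm_neg] at hneg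
  linarith

theorem starProjection_orthogonal_comp (hA : IsNearIsometryOn A W δ) {S : Submodule ℝ E}
    (hSW : S ≤ W) [(S.map A).HasOrthogonalProjection] :
    IsNearIsometryOn ((S.map A)ᗮ.starProjection.toLinearMap ∘ₗ A) (W ⊓ Sᗮ) δ := by
  rintro u ⟨huW, huS⟩
  simp only [LinearMap.comp_apply, ContinuousLinearMap.coe_coe]
  constructor
  · obtain ⟨s, hs, hAs⟩ := Submodule.mem_map.1 ((S.map A).starProjection_apply_mem (A u))
    have hproj : (S.map A)ᗮ.starProjection (A u) = A (u - s) := by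
      rw [Submodule.starProjection_orthogonal_val, map_sub, hAs]
    rcases le_total δ 1 with hδ | hδ
    · have hnorm : ‖u‖ ^ 2 ≤ ‖u - s‖ ^ 2 := by
        rw [norm_sub_sq_real, Submodule.inner_left_of_mem_orthogonal hs huS]
        nlinarith [sq_nonneg ‖s‖]
      calc (1 - δ) * ‖u‖ ^ 2 ≤ (1 - δ) * ‖u - s‖ ^ 2 :=
            mul_le_mul_of_nonneg_left hnorm (sub_nonneg.2 hδ)
        _ ≤ ‖A (u - s)‖ ^ 2 := (hA _ (W.sub_mem huW (hSW hs))).1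
        _ = _ := by rw [hproj]
    · exact (mul_nonpos_of_nonpos_of_nonneg (sub_nonpos.2 hδ) (sq_nonneg _)).trans (sq_nonneg _)
  · calc ‖(S.map A)ᗮ.starProjection (A u)‖ ^ 2 ≤ ‖A u‖ ^ 2 := by
          gcongr; exact Submodule.norm_starProjection_apply_le _ _
      _ ≤ (1 + δ) * ‖u‖ ^ 2 := (hA u huW).2

theorem abs_inner_starProjection_orthogonal_le (hA : IsNearIsometryOn A W δ)
    {S : Submodule ℝ E} (hSW : S ≤ W) [(S.map A).HasOrthogonalProjection] {u w : E}
    (hu : u ∈ W ⊓ Sᗮ) (hw : w ∈ W ⊓ Sᗮ) (huw : inner ℝ u w = 0) :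
    |inner ℝ (A u) ((S.map A)ᗮ.starProjection (A w))| ≤ δ * ‖u‖ * ‖w‖ := by
  have hPA := (hA.starProjection_orthogonal_comp hSW).abs_inner_map_sub_inner_le hu hw
  rw [huw, sub_zero] at hPA
  simp only [LinearMap.comp_apply, ContinuousLinearMap.coe_coe] at hPA
  rwa [Submodule.inner_starProjection_left_eq_right,
    Submodule.starProjection_eq_self_iff.2 (Submodule.starProjection_apply_mem _ _)] at hPA

end IsNearIsometryOn

end NearIsometry

theorem sub_eq_starProjection_orthogonal_of_forall_norm_sub_le {𝕜 E : Type*} [RCLike 𝕜]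
    [NormedAddCommGroup E] [InnerProductSpace 𝕜 E] {U : Submodule 𝕜 E}
    [U.HasOrthogonalProjection] {y p : E} (hp : p ∈ U) (hmin : ∀ q ∈ U, ‖y - p‖ ≤ ‖y - q‖) :
    y - p = Uᗮ.starProjection y := by
  have hinf : ‖y - p‖ = ⨅ q : U, ‖y - q‖ :=
    le_antisymm (le_ciInf fun q => hmin q q.2)
      (ciInf_le ⟨0, Set.forall_mem_range.2 fun _ => norm_nonneg _⟩ (⟨p, hp⟩ : U))
  rw [Submodule.starProjection_orthogonal_val, Submodule.eq_starProjection_of_mem_of_inner_eq_zero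
    hp ((U.norm_eq_iInf_iff_inner_eq_zero hp).1 hinf)]

section Supported

variable {n : ℕ} {S T : Finset (Fin n)} {u w x : Vec n}

theorem dot_eq_inner (u w : Vec n) : dot u w = inner ℝ u w := by
  simp only [dot, PiLp.inner_apply, RCLike.inner_apply, conj_trivial, mul_comm]

theorem suppF_subset_iff : suppF u ⊆ S ↔ ∀ i ∉ S, u i = 0 := by
  simp only [suppF, Finset.subset_iff, mem_filter, mem_univ, true_and, not_imp_comm]

/-- The coordinate subspace of vectors supported in `S`; its image under `Φ` is the span of the
columns indexed by `S`. -/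
def supported (S : Finset (Fin n)) : Submodule ℝ (Vec n) where
  carrier := {u | suppF u ⊆ S}
  zero_mem' := suppF_subset_iff.2 fun _ _ => rfl
  add_mem' hu hw := suppF_subset_iff.2 fun i hi => by
    rw [PiLp.add_apply, suppF_subset_iff.1 hu i hi, suppF_subset_iff.1 hw i hi, add_zero]
  smul_mem' c u hu := suppF_subset_iff.2 fun i hi => by
    rw [PiLp.smul_apply, suppF_subset_iff.1 hu i hi, smul_zero]

theorem mem_supported : u ∈ supported S ↔ ∀ i ∉ S, u i = 0 := suppF_subset_iff

theorem supported_mono (h : S ⊆ T) : supported S ≤ supported T := fun _ hu => hu.trans h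

theorem single_mem_supported {i : Fin n} (hi : i ∈ S) (a : ℝ) :
    EuclideanSpace.single i a ∈ supported S :=
  mem_supported.2 fun j hj => by
    rw [PiLp.single_apply, if_neg (ne_of_mem_of_not_mem hi hj).symm]

theorem isOrtho_supported (h : Disjoint S T) : supported S ⟂ supported T := by
  refine Submodule.isOrtho_iff_inner_eq.2 fun u hu w hw => ?_
  rw [← dot_eq_inner]
  refine Finset.sum_eq_zero fun i _ => ?_
  by_cases hi : i ∈ S
  · rw [mem_supported.1 hw i (Finset.disjoint_left.1 h hi), mul_zero]
  · rw [mem_supported.1 hu i hi, zero_mul]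

theorem restrict_apply (x : Vec n) (S : Finset (Fin n)) (i : Fin n) :
    restrict x S i = if i ∈ S then x i else 0 := rfl

theorem restrict_mem_supported (x : Vec n) (S : Finset (Fin n)) :
    restrict x S ∈ supported S :=
  mem_supported.2 fun i hi => by rw [restrict_apply, if_neg hi]

theorem sub_restrict_sdiff_mem_supported (hx : x ∈ supported T) :
    x - restrict x (T \ S) ∈ supported S := by
  refine mem_supported.2 fun i hiS => ?_
  by_cases hiT : i ∈ T
  · simp [restrict_apply, hiT, hiS]
  · simp [restrict_apply, hiT, mem_supported.1 hx i hiT]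

end Supported

section ColumnSpan

variable {m n : ℕ} (Φ : Matrix (Fin m) (Fin n) ℝ) {S T : Finset (Fin n)} {δ : ℝ}

theorem mulVec'_eq_toEuclideanLin (u : Vec n) : mulVec' Φ u = Matrix.toEuclideanLin Φ u := rfl

theorem toEuclideanLin_single (i : Fin n) :
    Matrix.toEuclideanLin Φ (EuclideanSpace.single i 1) = col Φ i := by
  ext j
  simp [col]

theorem mulVec'_eq_sum_smul_col (u : Vec n) : mulVec' Φ u = ∑ i, u i • col Φ i := by
  ext j
  simp [mulVec', col, mul_comm]

theorem map_toEuclideanLin_supported (S : Finset (Fin n)) :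
    (supported S).map (Matrix.toEuclideanLin Φ) = Submodule.span ℝ (col Φ '' S) := by
  refine le_antisymm (Submodule.map_le_iff_le_comap.2 fun u hu => ?_) (Submodule.span_le.2 ?_)
  · rw [Submodule.mem_comap, ← mulVec'_eq_toEuclideanLin, mulVec'_eq_sum_smul_col]
    refine Submodule.sum_mem _ fun i _ => ?_
    by_cases hi : i ∈ S
    · exact Submodule.smul_mem _ _ (Submodule.subset_span (Set.mem_image_of_mem _ hi))
    · rw [mem_supported.1 hu i hi, zero_smul]
      exact Submodule.zero_mem _
  · rintro _ ⟨i, hi, rfl⟩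
    exact ⟨_, single_mem_supported hi 1, toEuclideanLin_single Φ i⟩

theorem perpProj_eq_starProjection (S : Finset (Fin n)) (y : Vec m) :
    perpProj Φ S y = ((supported S).map (Matrix.toEuclideanLin Φ))ᗮ.starProjection y := by
  simp only [map_toEuclideanLin_supported, Submodule.starProjection_orthogonal_val]
  rfl

theorem perpProj_add (S : Finset (Fin n)) (y z : Vec m) :
    perpProj Φ S (y + z) = perpProj Φ S y + perpProj Φ S z := by
  simp only [perpProj_eq_starProjection, map_add]

theorem norm_perpProj_le (S : Finset (Fin n)) (y : Vec m) : ‖perpProj Φ S y‖ ≤ ‖y‖ := by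
  rw [perpProj_eq_starProjection]
  exact Submodule.norm_starProjection_apply_le _ _

theorem perpProj_mulVec'_eq_of_sub_mem_supported {x w : Vec n} (h : x - w ∈ supported S) :
    perpProj Φ S (mulVec' Φ x) = perpProj Φ S (mulVec' Φ w) := by
  simp only [perpProj_eq_starProjection, mulVec'_eq_toEuclideanLin]
  rw [← sub_eq_zero, ← map_sub, ← map_sub]
  exact Submodule.starProjection_orthogonal_apply_eq_zero (Submodule.mem_map_of_mem h)

variable {Φ}

theorem sub_mulVec'_eq_perpProj_of_forall_norm_le {y : Vec m} {z : Vec n} (hz : suppF z ⊆ S)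
    (hmin : ∀ u, suppF u ⊆ S → ‖y - mulVec' Φ z‖ ≤ ‖y - mulVec' Φ u‖) :
    y - mulVec' Φ z = perpProj Φ S y := by
  rw [perpProj_eq_starProjection]
  refine sub_eq_starProjection_orthogonal_of_forall_norm_sub_le (Submodule.mem_map_of_mem hz) ?_
  rintro _ ⟨u, hu, rfl⟩
  exact hmin u hu

theorem OMPRun.res_eq_perpProj {y : Vec m} {N k : ℕ} (run : OMPRun Φ y N) (hk : k ≤ N) :
    run.res k = perpProj Φ (run.sets k) y := by
  cases k with
  | zero => simp [run.res_zero, run.sets_zero, perpProj]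
  | succ j =>
    rw [run.res_succ j hk]
    exact sub_mulVec'_eq_perpProj_of_forall_norm_le (run.est_supp j hk) (run.est_min j hk)

theorem RIPConst.isNearIsometryOn_supported {L : ℕ} (hΦ : RIPConst Φ L δ) (hT : #T ≤ L) :
    IsNearIsometryOn (Matrix.toEuclideanLin Φ) (supported T) δ :=
  fun u hu => hΦ.1.2 u ((card_le_card hu).trans hT)

theorem RIPConst.norm_col_le (hΦ : RIPConst Φ 1 δ) (i : Fin n) : ‖col Φ i‖ ≤ √(1 + δ) := by
  have hi := (hΦ.isNearIsometryOn_supported (card_singleton i).le _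
    (single_mem_supported (mem_singleton_self i) 1)).2
  rw [toEuclideanLin_single, PiLp.norm_single, norm_one, one_pow, mul_one] at hi
  exact Real.le_sqrt_of_sq_le hi

namespace IsNearIsometryOn

variable {i : Fin n}

theorem abs_inner_col_perpProj_mulVec'_le
    (hΦ : IsNearIsometryOn (Matrix.toEuclideanLin Φ) (supported (insert i T)) δ) (hi : i ∉ T)
    (hST : S ⊆ T) {w : Vec n} (hw : w ∈ supported (T \ S)) :
    |inner ℝ (col Φ i) (perpProj Φ S (mulVec' Φ w))| ≤ δ * ‖w‖ := by
  have hTi : T ⊆ insert i T := subset_insert i T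
  have he : EuclideanSpace.single i 1 ∈ supported {i} :=
    single_mem_supported (mem_singleton_self i) 1
  have heS : Disjoint {i} S := disjoint_singleton_left.2 fun h => hi (hST h)
  have hew : Disjoint {i} (T \ S) := disjoint_singleton_left.2 fun h => hi (sdiff_subset h)
  have hbound := hΦ.abs_inner_starProjection_orthogonal_le (supported_mono (hST.trans hTi))
    ⟨single_mem_supported (mem_insert_self i T) 1, isOrtho_supported heS he⟩
    ⟨supported_mono (sdiff_subset.trans hTi) hw, isOrtho_supported sdiff_disjoint hw⟩
    ((isOrtho_supported hew).inner_eq he hw)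
  rwa [toEuclideanLin_single, PiLp.norm_single, norm_one, mul_one, ← mulVec'_eq_toEuclideanLin,
    ← perpProj_eq_starProjection] at hbound

theorem abs_inner_col_perpProj_le
    (hΦ : IsNearIsometryOn (Matrix.toEuclideanLin Φ) (supported (insert i T)) δ) (hi : i ∉ T)
    (hST : S ⊆ T) {x : Vec n} (hx : x ∈ supported T) (v : Vec m) :
    |inner ℝ (col Φ i) (perpProj Φ S (mulVec' Φ x + v))| ≤
      δ * ‖restrict x (T \ S)‖ + ‖col Φ i‖ * ‖v‖ := by
  rw [perpProj_add, inner_add_right, perpProj_mulVec'_eq_of_sub_mem_supported Φ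
    (sub_restrict_sdiff_mem_supported hx)]
  have hsignal := hΦ.abs_inner_col_perpProj_mulVec'_le hi hST (restrict_mem_supported x (T \ S))
  have hnoise : |inner ℝ (col Φ i) (perpProj Φ S v)| ≤ ‖col Φ i‖ * ‖v‖ :=
    (abs_real_inner_le_norm _ _).trans (by gcongr; exact norm_perpProj_le Φ S v)
  exact (abs_add_le _ _).trans (add_le_add hsignal hnoise)

end IsNearIsometryOn

end ColumnSpan

theorem stmt6_general {m n K N k : ℕ} (Φ : Matrix (Fin m) (Fin n) ℝ) (δK1 δ1 : ℝ)
    (x : Vec n) (v y : Vec m) (T : Finset (Fin n)) (hsupp : suppF x ⊆ T) (hcard : #T ≤ K)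
    (hRIP : RIPConst Φ (K + 1) δK1) (hRIP1 : RIPConst Φ 1 δ1) (hy : y = mulVec' Φ x + v)
    (run : OMPRun Φ y N) (hk : k ≤ N) (hsub : run.sets k ⊆ T) (i : Fin n) (hi : i ∉ T) :
    |dot (col Φ i) (run.res k)| ≤
      δK1 * ‖restrict x (T \ run.sets k)‖ + √(1 + δ1) * ‖v‖ := by
  have hnear : IsNearIsometryOn (Matrix.toEuclideanLin Φ) (supported (insert i T)) δK1 :=
    hRIP.isNearIsometryOn_supported ((card_insert_le i T).trans (by gcongr))
  subst hy
  rw [dot_eq_inner, run.res_eq_perpProj hk]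
  calc _ ≤ δK1 * ‖restrict x (T \ run.sets k)‖ + ‖col Φ i‖ * ‖v‖ :=
        hnear.abs_inner_col_perpProj_le hi hsub hsupp v
    _ ≤ _ := by gcongr; exact hRIP1.norm_col_le i

/-- upper bound on `v̄ = max_{i ∉ T ∪ T^k} |⟨φ_i, r^k⟩|` when the
first `k` iterations of OMP selected only correct indices. -/
theorem stmt6 {m n K k : ℕ} (Φ : Matrix (Fin m) (Fin n) ℝ) (δK1 δ1 : ℝ)
    (x : Vec n) (v y : Vec m) (T : Finset (Fin n))
    (hsupp : suppF x = T) (hcard : T.card = K) (hK1 : 1 ≤ K) (hn : K + 1 ≤ n)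
    (hRIP : RIPConst Φ (K + 1) δK1) (hδ : δK1 < 1) (hRIP1 : RIPConst Φ 1 δ1)
    (hy : y = mulVec' Φ x + v)
    (hk1 : 1 ≤ k) (hkK : k < K)
    (run : OMPRun Φ y k)
    (hsub : run.sets k ⊆ T) (hcardk : (run.sets k).card = k) :
    ∀ i : Fin n, i ∉ T ∪ run.sets k →
      |dot (col Φ i) (run.res k)| ≤
        δK1 * ‖restrict x (T \ run.sets k)‖ + Real.sqrt (1 + δ1) * ‖v‖ := by
  intro i hi
  exact stmt6_general Φ δK1 δ1 x v y T hsupp.subset hcard.le hRIP hRIP1 hy run le_rfl hsub i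
    fun hiT => hi (mem_union_left _ hiT)

end
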